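/- Fix a nonzero integer Δ, let t be the number of distinct prime factors of Δ, and let n ∈ {2, 4, 6, 8, 10, 12}. Then the set of pairs (A, B) ∈ ℤ × ℤ such that 4A³ + 27B² ≠ 0, the discriminant −16(4A³ + 27B²) of the elliptic curve Y² = X³ + A·X + B equals Δ, and this curve has a rational point of order n, is finite and has cardinality at most 7⁶⁰ + 6·7^(2(t+1)). -/

import Mathlib

open WeierstrassCurve

/-!
The discriminant of a curve `Y² = X³ + A X + B` with a rational point of even order is `16 N` for an
integer `N`, and the curve has a point of order two, that is, `X³ + A X + B` has an integral root
`r`. With `D = 3 r² + A` and `Y = 3 r D` one has `Y² = 4 D³ + N`, where `D` divides `N`, and `Y`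
determines `A` and `B`.

Let `S` consist of infinity and the `t` primes dividing `16 N`. In `ℤ√N` the numbers `Y - √N`,
`-Y - √N` and `2 √N` add up to zero, and they are `S`-units because `(Y - √N) (Y + √N) = 4 D³`. The
number of such triples is bounded by the hypergeometric method. At each place of `S` a triple is
close to one of the three points of the line `x + y + z = 0` with a vanishing coordinate. Recording
which one and, approximately, how close sorts the triples of large quality into fewer than
`7 ^ (2 (t + 1))` classes. The determinant of a Padé approximation at one triple of a class with
another triple of that class is small at all places of `S` together. By the product formula the
qualities in a class therefore grow at least geometrically and remain bounded in terms of the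
smallest of them, which leaves at most 12 triples in each class. The triples of small quality
correspond to quotients `D / D₀` of bounded height, which are counted directly.
-/

namespace EvenOrders

open Finset hiding mem_antidiagonal
open Finset.HasAntidiagonal (mem_antidiagonal)
open Real (log exp)

section PadePolynomials

variable {R S : Type*} [CommRing R] [CommRing S]

/-- The homogeneous polynomial of degree `m` that is the coefficient of `tᵐ` in
`((1 + x t) (1 - y t)) ^ (-(m + 1))`. -/
def padePoly (m : ℕ) (x y : R) : R :=
  ∑ ij ∈ antidiagonal m,
    (-1) ^ ij.1 * ((m + ij.1).choose m * (m + ij.2).choose m) * (x ^ ij.1 * y ^ ij.2)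

lemma map_padePoly (f : R →+* S) (m : ℕ) (x y : R) :
    f (padePoly m x y) = padePoly m (f x) (f y) := by
  simp [padePoly]

lemma padePoly_zero (x y : R) : padePoly 0 x y = 1 := by
  simp [padePoly]

lemma padePoly_one (x y : R) : padePoly 1 x y = 2 * y - 2 * x := by
  simp [padePoly, Nat.antidiagonal_succ]
  ring

lemma padePoly_two (x y : R) : padePoly 2 x y = 6 * y ^ 2 - 9 * x * y + 6 * x ^ 2 := by
  have h : Nat.choose 4 2 = 6 := rfl
  simp [padePoly, Nat.antidiagonal_succ, h]
  ring

lemma padePoly_three (x y : R) :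
    padePoly 3 x y = 20 * y ^ 3 - 40 * x * y ^ 2 + 40 * x ^ 2 * y - 20 * x ^ 3 := by
  have h₅ : Nat.choose 5 3 = 10 := rfl
  have h₆ : Nat.choose 6 3 = 20 := rfl
  simp [padePoly, Nat.antidiagonal_succ, h₅, h₆]
  ring

lemma padePoly_swap (m : ℕ) (x y : R) : padePoly m y x = (-1) ^ m * padePoly m x y := by
  simp only [padePoly, mul_sum]
  rw [← Nat.sum_antidiagonal_swap]
  refine sum_congr rfl fun ij hij => ?_
  have hsign : (-1 : R) ^ ij.2 = (-1) ^ m * (-1) ^ ij.1 := by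
    rw [← mem_antidiagonal.mp hij, pow_add, mul_comm, ← mul_assoc, ← mul_pow]
    simp
  rw [Prod.fst_swap, Prod.snd_swap, hsign]
  ring

lemma padePoly_neg_neg (m : ℕ) (x y : R) : padePoly m (-x) (-y) = (-1) ^ m * padePoly m x y := by
  simp only [padePoly, mul_sum]
  refine sum_congr rfl fun ij hij => ?_
  rw [neg_pow x, neg_pow y, ← mem_antidiagonal.mp hij, pow_add]
  ring

lemma pow_mul_pow_mul_padePoly {m a b n : ℕ} (ha : a ≤ m) (hb : b ≤ m)
    (hn : m + a + b = n) (x y : R) :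
    x ^ a * y ^ b * padePoly m x y = ∑ pq ∈ antidiagonal n,
      (-1) ^ (pq.1 + a) * ((pq.1 + (m - a)).choose m * (pq.2 + (m - b)).choose m) *
        (x ^ pq.1 * y ^ pq.2) := by
  rw [padePoly, mul_sum]
  refine sum_of_injOn (fun ij => (ij.1 + a, ij.2 + b)) ?_ ?_ ?_ ?_
  · rintro ⟨i, j⟩ - ⟨k, l⟩ - h
    simpa using h
  · rintro ⟨i, j⟩ hij
    simp only [mem_coe, mem_antidiagonal] at hij ⊢
    omega
  · rintro ⟨p, q⟩ hpq hout
    rw [mem_antidiagonal] at hpq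
    have hlt : p + (m - a) < m ∨ q + (m - b) < m := by
      by_contra! hle
      refine hout ⟨(p - a, q - b), ?_, ?_⟩
      · simp only [mem_coe, mem_antidiagonal]
        omega
      · simp only [Prod.mk.injEq]
        omega
    rcases hlt with hlt | hlt <;> simp [Nat.choose_eq_zero_of_lt hlt]
  · rintro ⟨i, j⟩ -
    rw [show i + a + (m - a) = m + i by omega, show j + b + (m - b) = m + j by omega,
      show i + a + a = i + 2 * a by ring, pow_add _ i, pow_mul]
    simp only [even_two, Even.neg_pow, one_pow, mul_one]
    ring

lemma cast_choose_succ_right (n k : ℕ) :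
    (n.choose (k + 1) : ℚ) = n.choose k * (n - k) / (k + 1) := by
  rw [eq_div_iff (by positivity)]
  rcases lt_or_ge n k with h | h
  · simp [Nat.choose_eq_zero_of_lt h, Nat.choose_eq_zero_of_lt (h.trans k.lt_succ_self)]
  · exact_mod_cast Nat.choose_succ_right_eq n k

lemma cast_choose_succ_succ (n k : ℕ) :
    ((n + 1).choose (k + 1) : ℚ) = n.choose k * (n + 1) / (k + 1) := by
  rw [eq_div_iff (by positivity)]
  exact_mod_cast (Nat.add_one_mul_choose_eq n k).symm.trans (mul_comm _ _)

lemma choose_recurrence {l p q : ℕ} (hpq : p + q = l + 6) :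
    ((l + 3) * (l + 4) : ℤ) * ((p + (l + 4)).choose (l + 4) * (q + (l + 2)).choose (l + 4)
        - 2 * ((p + (l + 3)).choose (l + 4) * (q + (l + 3)).choose (l + 4))
        + (p + (l + 2)).choose (l + 4) * (q + (l + 4)).choose (l + 4)) =
      (l + 3) * (2 * l + 7) * (2 * ((p + l).choose (l + 3) * (q + (l + 3)).choose (l + 3))
        - 3 * ((p + (l + 1)).choose (l + 3) * (q + (l + 2)).choose (l + 3))
        - 3 * ((p + (l + 2)).choose (l + 3) * (q + (l + 1)).choose (l + 3))
        + 2 * ((p + (l + 3)).choose (l + 3) * (q + l).choose (l + 3)))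
      + 3 * (9 * (l + 3) ^ 2 - 1) * ((p + l).choose (l + 2) * (q + l).choose (l + 2)) := by
  qify
  simp only [← add_assoc, cast_choose_succ_succ, cast_choose_succ_right]
  push_cast
  have hl : (l : ℚ) = p + q - 6 := by
    rw [eq_sub_iff_add_eq]
    exact_mod_cast hpq.symm
  generalize ((p + l).choose l : ℚ) = C
  generalize ((q + l).choose l : ℚ) = D
  field_simp
  rw [hl]
  ring

lemma padePoly_recurrence (m : ℕ) (x y : R) :
    ((m + 1) * (m + 2) : R) * ((x + y) ^ 2 * padePoly (m + 2) x y) =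
      (m + 1) * (2 * m + 3) *
        ((-2 * x ^ 3 - 3 * x ^ 2 * y + 3 * x * y ^ 2 + 2 * y ^ 3) * padePoly (m + 1) x y)
      + 3 * (9 * (m + 1) ^ 2 - 1) * (x ^ 2 * y ^ 2 * padePoly m x y) := by
  match m with
  | 0 => simp only [padePoly_zero, padePoly_one, padePoly_two, zero_add]; push_cast; ring
  | 1 => simp only [padePoly_one, padePoly_two, padePoly_three, Nat.reduceAdd]; push_cast; ring
  | l + 2 =>
    trans (l + 3) * (l + 4) * (x ^ 0 * y ^ 2 * padePoly (l + 4) x y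
      + 2 * (x ^ 1 * y ^ 1 * padePoly (l + 4) x y) + x ^ 2 * y ^ 0 * padePoly (l + 4) x y)
    · push_cast; ring
    trans (l + 3) * (2 * l + 7) * (-2 * (x ^ 3 * y ^ 0 * padePoly (l + 3) x y)
        - 3 * (x ^ 2 * y ^ 1 * padePoly (l + 3) x y) + 3 * (x ^ 1 * y ^ 2 * padePoly (l + 3) x y)
        + 2 * (x ^ 0 * y ^ 3 * padePoly (l + 3) x y))
      + 3 * (9 * (l + 3) ^ 2 - 1) * (x ^ 2 * y ^ 2 * padePoly (l + 2) x y)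
    · iterate 8 rw [pow_mul_pow_mul_padePoly (n := l + 6) (by omega) (by omega) (by ring)]
      simp only [mul_sum, ← sum_add_distrib, ← sum_sub_distrib]
      refine sum_congr rfl fun pq hpq => ?_
      have hcoeff := congr((-1) ^ pq.1 * ($(choose_recurrence (mem_antidiagonal.mp hpq)) : R)
        * (x ^ pq.1 * y ^ pq.2))
      push_cast at hcoeff
      simp only [pow_add, Nat.reduceSubDiff, tsub_zero, Nat.add_sub_cancel_right]
      linear_combination hcoeff
    · push_cast; ring

lemma sum_antidiagonal_choose_mul_choose (a b m : ℕ) :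
    ∑ ij ∈ antidiagonal m, (a + ij.1).choose a * (b + ij.2).choose b =
      (a + b + 1 + m).choose m := by
  have h := congr(PowerSeries.coeff m
    (Units.val $(PowerSeries.invOneSubPow_add (S := ℤ) (a + 1) (b + 1))))
  rw [show a + 1 + (b + 1) = a + b + 1 + 1 by ring] at h
  simp only [Units.val_mul, PowerSeries.invOneSubPow_val_succ_eq_mk_add_choose,
    PowerSeries.coeff_mul, PowerSeries.coeff_mk] at h
  rw [Nat.choose_symm_add (a := a + b + 1)] at h
  exact_mod_cast h.symm

lemma sum_padePoly_coeff_le (m : ℕ) :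
    ∑ ij ∈ antidiagonal m, (m + ij.1).choose m * (m + ij.2).choose m ≤ 2 ^ (3 * m) := by
  rw [sum_antidiagonal_choose_mul_choose, show m + m + 1 + m = 3 * m + 1 by ring]
  exact Nat.choose_succ_le_two_pow (3 * m) m

end PadePolynomials

section PadeForms

variable {R S : Type*} [CommRing R] [CommRing S] {x y z : R}

/-- The form `x ^ (2m + 1) * padePoly m y z`; its cyclic shifts are the coordinates of the
degree `3m + 1` Padé approximation to a triple `(x, y, z)` with sum zero. -/
def pade (m : ℕ) (x y z : R) : R :=
  x ^ (2 * m + 1) * padePoly m y z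

lemma map_pade (f : R →+* S) (m : ℕ) (x y z : R) :
    f (pade m x y z) = pade m (f x) (f y) (f z) := by
  simp [pade, map_padePoly]

lemma pade_swap (m : ℕ) (x y z : R) : pade m x z y = (-1) ^ m * pade m x y z := by
  rw [pade, pade, padePoly_swap]
  ring

lemma pade_neg (m : ℕ) (x y z : R) :
    pade m (-x) (-y) (-z) = (-1) ^ (m + 1) * pade m x y z := by
  rw [pade, pade, padePoly_neg_neg, Odd.neg_pow ⟨m, rfl⟩]
  ring

lemma pade_zero (x y z : R) : pade 0 x y z = x := by
  simp [pade, padePoly_zero]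

lemma pade_one (x y z : R) : pade 1 x y z = x ^ 3 * (2 * z - 2 * y) := by
  simp [pade, padePoly_one]

lemma pade_recurrence (h : x + y + z = 0) (m : ℕ) :
    ((m + 1) * (m + 2) : R) * pade (m + 2) x y z =
      (m + 1) * (2 * m + 3) * ((x - y) * (y - z) * (z - x)) * pade (m + 1) x y z
      + 3 * (9 * (m + 1) ^ 2 - 1) * (x * y * z) ^ 2 * pade m x y z := by
  obtain rfl : x = -(y + z) := by linear_combination h
  simp only [pade]
  linear_combination (-(y + z)) ^ (2 * m + 3) * padePoly_recurrence m y z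

lemma pade_cyclic_sum_of_charZero [IsDomain R] [CharZero R] (h : x + y + z = 0) (m : ℕ) :
    pade m x y z + pade m y z x + pade m z x y = 0 := by
  induction m using Nat.twoStepInduction with
  | zero => simpa only [pade_zero] using h
  | one =>
    obtain rfl : x = -(y + z) := by linear_combination h
    simp only [pade_one]
    ring
  | more m ih₀ ih₁ =>
    have hne : ((m + 1) * (m + 2) : R) ≠ 0 := by norm_cast
    refine (mul_eq_zero_iff_left hne).mp ?_
    linear_combination pade_recurrence h m
      + pade_recurrence (x := y) (y := z) (z := x) (by linear_combination h) m
      + pade_recurrence (x := z) (y := x) (z := y) (by linear_combination h) m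
      + 3 * (9 * (m + 1) ^ 2 - 1) * (x * y * z) ^ 2 * ih₀
      + (m + 1) * (2 * m + 3) * ((x - y) * (y - z) * (z - x)) * ih₁

lemma pade_cyclic_sum (h : x + y + z = 0) (m : ℕ) :
    pade m x y z + pade m y z x + pade m z x y = 0 := by
  let X : Fin 2 → MvPolynomial (Fin 2) ℤ := MvPolynomial.X
  have huniv : X 0 + X 1 + -(X 0 + X 1) = 0 := add_neg_cancel _
  have hmap := congr(MvPolynomial.eval₂Hom (Int.castRingHom R) ![x, y]
    $(pade_cyclic_sum_of_charZero huniv m))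
  obtain rfl : z = -(x + y) := by linear_combination h
  simpa [X, map_pade, -MvPolynomial.coe_eval₂Hom] using hmap

/-- This makes consecutive approximations independent, unless `x y z = 0` or `x³ = y³`. -/
lemma pade_casoratian (h : x + y + z = 0) (m : ℕ) :
    (m.factorial ^ 2 * (m + 1).factorial : R) *
        (pade m x y z * pade (m + 1) y z x - pade m y z x * pade (m + 1) x y z) =
      (-1) ^ (m + 1) * (2 * (3 * m + 1).factorial) * (x * y * z) ^ (2 * m + 1)
        * (x ^ 2 + x * y + y ^ 2) := by
  induction m with
  | zero =>
    obtain rfl : z = -(x + y) := by linear_combination h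
    simp [pade_zero, pade_one]
    ring
  | succ m ih =>
    have hx := pade_recurrence h m
    have hy := pade_recurrence (x := y) (y := z) (z := x) (by linear_combination h) m
    simp only [Nat.factorial_succ, show 3 * (m + 1) + 1 = 3 * m + 1 + 1 + 1 + 1 by ring] at ih ⊢
    push_cast at ih ⊢
    linear_combination (m.factorial ^ 3 * (m + 1) ^ 2 : R) *
        (pade (m + 1) x y z * hy - pade (m + 1) y z x * hx)
      - 3 * (9 * (m + 1) ^ 2 - 1) * (x * y * z) ^ 2 * (m + 1) * ih

end PadeForms

section Triples

variable {R S : Type*} [CommRing R] [CommRing S] {w w' : Fin 3 → R}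

lemma add_cyclic_eq_zero (hw : ∑ i, w i = 0) (i : Fin 3) :
    w i + w (i + 1) + w (i + 2) = 0 := by
  rw [← hw, Fin.sum_univ_three]
  fin_cases i <;> simp <;> ring

/-- The determinant of the degree `3m + 1` Padé approximation to `w` with the triple `w'`: it is
small where both `w` and `w'` are close to a common point. -/
def padeDet (m : ℕ) (w w' : Fin 3 → R) : R :=
  w' 0 * pade m (w 1) (w 2) (w 0) - w' 1 * pade m (w 0) (w 1) (w 2)

lemma map_padeDet (f : R →+* S) (m : ℕ) (w w' : Fin 3 → R) :
    f (padeDet m w w') = padeDet m (f ∘ w) (f ∘ w') := by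
  simp [padeDet, map_pade]

lemma padeDet_zero (w w' : Fin 3 → R) : padeDet 0 w w' = w' 0 * w 1 - w' 1 * w 0 := by
  simp [padeDet, pade_zero]

lemma padeDet_eq (hw : ∑ i, w i = 0) (hw' : ∑ i, w' i = 0) (m : ℕ) (i : Fin 3) :
    padeDet m w w' = w' i * pade m (w (i + 1)) (w (i + 2)) (w i)
      - w' (i + 1) * pade m (w i) (w (i + 1)) (w (i + 2)) := by
  have h := pade_cyclic_sum (add_cyclic_eq_zero hw 0) m
  have h' := add_cyclic_eq_zero hw' 0
  simp only [zero_add] at h h'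
  fin_cases i
  · rfl
  · simp only [padeDet, Fin.mk_one, Fin.isValue, Fin.reduceAdd]
    linear_combination pade m (w 1) (w 2) (w 0) * h' - w' 1 * h
  · simp only [padeDet, Fin.reduceFinMk, Fin.isValue, Fin.reduceAdd]
    linear_combination w' 0 * h - pade m (w 0) (w 1) (w 2) * h'

lemma padeDet_mul_sub_padeDet_mul (hw : ∑ i, w i = 0) (w' : Fin 3 → R) (m : ℕ) :
    (m.factorial ^ 2 * (m + 1).factorial : R) *
        (padeDet (m + 1) w w' * pade m (w 0) (w 1) (w 2)
          - padeDet m w w' * pade (m + 1) (w 0) (w 1) (w 2)) =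
      (-1) ^ (m + 1) * (2 * (3 * m + 1).factorial) * w' 0 * (∏ i, w i) ^ (2 * m + 1)
        * (w 0 ^ 2 + w 0 * w 1 + w 1 ^ 2) := by
  have h : w 0 + w 1 + w 2 = 0 := add_cyclic_eq_zero hw 0
  rw [Fin.prod_univ_three, padeDet, padeDet]
  linear_combination w' 0 * pade_casoratian h m

end Triples

section Seminorms

variable {R : Type*} [CommRing R] (a : MulRingSeminorm R) {w w' : Fin 3 → R}

open Classical in
/-- The constant of the quasi-ultrametric inequality `map_add_le_addConst_mul_max` for `a`. -/
noncomputable def addConst : ℝ :=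
  if IsNonarchimedean a then 1 else 2

lemma one_le_addConst : 1 ≤ addConst a := by
  rw [addConst]
  split_ifs <;> norm_num

lemma map_add_le_addConst_mul_max (x y : R) : a (x + y) ≤ addConst a * max (a x) (a y) := by
  rw [addConst]
  split_ifs with ha
  · simpa using ha x y
  · linarith [map_add_le_add a x y, le_max_left (a x) (a y), le_max_right (a x) (a y)]

lemma map_natCast_le (n : ℕ) : a n ≤ n := by
  induction n with
  | zero => simp
  | succ n ih => simpa using (map_add_le_add a (n : R) 1).trans (by simpa using ih)

lemma map_padePoly_le (m : ℕ) (x y : R) :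
    a (padePoly m x y) ≤ addConst a ^ (3 * m) * max (a x) (a y) ^ m := by
  set M := max (a x) (a y)
  have hmonomial {ij : ℕ × ℕ} (h : ij ∈ antidiagonal m) : a x ^ ij.1 * a y ^ ij.2 ≤ M ^ m := by
    rw [← mem_antidiagonal.mp h, pow_add]
    gcongr
    · exact le_max_left _ _
    · exact le_max_right _ _
  have hterm (ij : ℕ × ℕ) : a ((-1) ^ ij.1 * ((m + ij.1).choose m * (m + ij.2).choose m)
      * (x ^ ij.1 * y ^ ij.2)) =
        a ((m + ij.1).choose m * (m + ij.2).choose m : ℕ) * (a x ^ ij.1 * a y ^ ij.2) := by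
    simp [map_mul, map_pow, map_neg_eq_map]
  rw [addConst, padePoly]
  split_ifs with ha
  · have hnonempty : (antidiagonal m).Nonempty := ⟨(0, m), by simp⟩
    obtain ⟨ij, hij, hle⟩ := ha.finset_image_add_of_nonempty _ hnonempty
    refine hle.trans ?_
    rw [hterm, one_pow]
    exact mul_le_mul ha.apply_natCast_le_one (hmonomial hij) (by positivity) zero_le_one
  · calc _ ≤ ∑ ij ∈ antidiagonal m,
          a ((m + ij.1).choose m * (m + ij.2).choose m : ℕ) * (a x ^ ij.1 * a y ^ ij.2) := by
          simp only [← hterm]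
          exact le_sum_of_subadditive a (map_zero a).le (map_add_le_add a) _ _
      _ ≤ ∑ ij ∈ antidiagonal m, ((m + ij.1).choose m * (m + ij.2).choose m : ℕ) * M ^ m := by
          refine sum_le_sum fun ij hij => ?_
          gcongr
          · exact map_natCast_le a _
          · exact hmonomial hij
      _ = (∑ ij ∈ antidiagonal m, (m + ij.1).choose m * (m + ij.2).choose m : ℕ) * M ^ m := by
          push_cast
          rw [sum_mul]
      _ ≤ 2 ^ (3 * m) * M ^ m := by
          gcongr
          exact_mod_cast sum_padePoly_coeff_le m

/-- The largest absolute value of a coordinate of a triple. -/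
noncomputable def maxVal (w : Fin 3 → R) : ℝ :=
  ⨆ i, a (w i)

/-- The smallest absolute value of a coordinate of a triple. -/
noncomputable def minVal (w : Fin 3 → R) : ℝ :=
  ⨅ i, a (w i)

variable {a}

lemma le_maxVal (w : Fin 3 → R) (i : Fin 3) : a (w i) ≤ maxVal a w :=
  Finite.le_ciSup (fun i => a (w i)) i

lemma minVal_le (w : Fin 3 → R) (i : Fin 3) : minVal a w ≤ a (w i) :=
  Finite.ciInf_le (fun i => a (w i)) i

lemma maxVal_sq_mul_minVal_le (hw : ∑ i, w i = 0) :
    maxVal a w ^ 2 * minVal a w ≤ addConst a * ∏ i, a (w i) := by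
  obtain ⟨k, hk⟩ := exists_eq_ciInf_of_finite (f := fun i => a (w i))
  have hmin (i : Fin 3) : a (w k) ≤ a (w i) := hk.trans_le (minVal_le w i)
  have hsum := add_cyclic_eq_zero hw k
  have h₁ : a (w (k + 1)) ≤ addConst a * a (w (k + 2)) := by
    have h := map_add_le_addConst_mul_max a (w k) (w (k + 2))
    rwa [max_eq_right (hmin _), show w k + w (k + 2) = -w (k + 1) by linear_combination hsum,
      map_neg_eq_map] at h
  have h₂ : a (w (k + 2)) ≤ addConst a * a (w (k + 1)) := by
    have h := map_add_le_addConst_mul_max a (w k) (w (k + 1))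
    rwa [max_eq_right (hmin _), show w k + w (k + 1) = -w (k + 2) by linear_combination hsum,
      map_neg_eq_map] at h
  have hmax : maxVal a w ≤ max (a (w (k + 1))) (a (w (k + 2))) := by
    refine ciSup_le fun i => ?_
    have hi : i = k ∨ i = k + 1 ∨ i = k + 2 := by omega
    rcases hi with rfl | rfl | rfl
    · exact (hmin _).trans (le_max_left _ _)
    · exact le_max_left _ _
    · exact le_max_right _ _
  have hprod : ∏ i, a (w i) = a (w k) * a (w (k + 1)) * a (w (k + 2)) := by
    rw [Fin.prod_univ_three]
    fin_cases k <;> simp <;> ring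
  have hsq : maxVal a w ^ 2 ≤ addConst a * (a (w (k + 1)) * a (w (k + 2))) := by
    have hnonneg : 0 ≤ maxVal a w := (apply_nonneg a _).trans (le_maxVal w 0)
    rcases le_total (a (w (k + 1))) (a (w (k + 2))) with h | h
    · rw [max_eq_right h] at hmax
      nlinarith [apply_nonneg a (w (k + 2))]
    · rw [max_eq_left h] at hmax
      nlinarith [apply_nonneg a (w (k + 1))]
  rw [hprod, minVal, ← hk]
  nlinarith [apply_nonneg a (w k)]

lemma map_pade_le {x y z : R} {M : ℝ} (hy : a y ≤ M) (hz : a z ≤ M) (m : ℕ) :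
    a (pade m x y z) ≤ addConst a ^ (3 * m) * (a x ^ (2 * m + 1) * M ^ m) := by
  have h := (one_le_addConst a).trans' zero_le_one
  calc a (pade m x y z) = a x ^ (2 * m + 1) * a (padePoly m y z) := by
        rw [pade, map_mul, map_pow]
    _ ≤ a x ^ (2 * m + 1) * (addConst a ^ (3 * m) * M ^ m) := by
        gcongr
        refine (map_padePoly_le a m y z).trans ?_
        gcongr
        exact max_le hy hz
    _ = _ := by ring

lemma map_padeDet_le (hw : ∑ i, w i = 0) (hw' : ∑ i, w' i = 0) {m : ℕ} {i : Fin 3} {ε : ℝ}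
    (h : a (w i) ^ (2 * m + 1) ≤ maxVal a w ^ (2 * m + 1) * ε)
    (h' : a (w' i) ≤ maxVal a w' * ε) :
    a (padeDet m w w') ≤
      addConst a ^ (3 * m + 1) * (maxVal a w' * maxVal a w ^ (3 * m + 1) * ε) := by
  have hκ := (one_le_addConst a).trans' zero_le_one
  have hM := (apply_nonneg a _).trans (le_maxVal w 0)
  have hM' := (apply_nonneg a _).trans (le_maxVal w' 0)
  have hε := (apply_nonneg a _).trans h'
  have h₁ : a (w' i * pade m (w (i + 1)) (w (i + 2)) (w i)) ≤
      addConst a ^ (3 * m) * (maxVal a w' * maxVal a w ^ (3 * m + 1) * ε) := by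
    calc _ ≤ (maxVal a w' * ε) *
          (addConst a ^ (3 * m) * (maxVal a w ^ (2 * m + 1) * maxVal a w ^ m)) := by
          rw [map_mul]
          refine mul_le_mul h' ?_ (apply_nonneg a _) hε
          refine (map_pade_le (le_maxVal w _) (le_maxVal w _) m).trans ?_
          gcongr
          exact le_maxVal w _
      _ = _ := by ring
  have h₂ : a (w' (i + 1) * pade m (w i) (w (i + 1)) (w (i + 2))) ≤
      addConst a ^ (3 * m) * (maxVal a w' * maxVal a w ^ (3 * m + 1) * ε) := by
    calc _ ≤ maxVal a w' *
          (addConst a ^ (3 * m) * (maxVal a w ^ (2 * m + 1) * ε * maxVal a w ^ m)) := by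
          rw [map_mul]
          refine mul_le_mul (le_maxVal w' _) ?_ (apply_nonneg a _) hM'
          refine (map_pade_le (le_maxVal w _) (le_maxVal w _) m).trans ?_
          gcongr
      _ = _ := by ring
  rw [padeDet_eq hw hw' m i, sub_eq_add_neg]
  refine (map_add_le_addConst_mul_max a _ _).trans ?_
  rw [map_neg_eq_map, pow_succ', mul_assoc]
  gcongr
  exact max_le h₁ h₂

lemma map_eq_of_map_sub_eq_zero {x y : R} (h : a (x - y) = 0) : a x = a y :=
  sub_eq_zero.mp (abs_nonpos_iff.mp (h ▸ abs_sub_map_le_sub a x y))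

lemma map_eq_of_padeDet_eq_zero (ha : ∀ n : ℕ, n ≠ 0 → a n ≠ 0) (hw : ∑ i, w i = 0)
    (hw₀ : ∀ i, a (w i) ≠ 0) (hw₀' : a (w' 0) ≠ 0) {m : ℕ} (h : a (padeDet m w w') = 0)
    (h' : a (padeDet (m + 1) w w') = 0) (i : Fin 3) :
    a (w (i + 1)) = a (w i) := by
  have hquad : a (w 0 ^ 2 + w 0 * w 1 + w 1 ^ 2) = 0 := by
    have hcas := congr(a $(padeDet_mul_sub_padeDet_mul hw w' m))
    have hsub : a (padeDet (m + 1) w w' * pade m (w 0) (w 1) (w 2)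
        - padeDet m w w' * pade (m + 1) (w 0) (w 1) (w 2)) = 0 := by
      refine le_antisymm ((map_sub_le_add a _ _).trans_eq ?_) (apply_nonneg a _)
      simp [h, h']
    rw [map_mul, hsub, mul_zero] at hcas
    have htwo : a 2 ≠ 0 := mod_cast ha 2 two_ne_zero
    simpa [map_neg_eq_map, prod_eq_zero_iff, htwo, ha _ (Nat.factorial_ne_zero _), hw₀, hw₀']
      using hcas.symm
  have hcube : a (w (i + 1) ^ 3 - w i ^ 3) = 0 := by
    have hfactor : w (i + 1) ^ 3 - w i ^ 3 =
        (w (i + 1) - w i) * (w 0 ^ 2 + w 0 * w 1 + w 1 ^ 2) := by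
      have h₂ : w 2 = -(w 0 + w 1) := by linear_combination (Fin.sum_univ_three w).symm.trans hw
      fin_cases i <;> simp [h₂] <;> ring
    rw [hfactor, map_mul, hquad, mul_zero]
  have hpow := map_eq_of_map_sub_eq_zero hcube
  rw [map_pow, map_pow] at hpow
  exact (pow_left_inj₀ (apply_nonneg a _) (apply_nonneg a _) three_ne_zero).mp hpow

end Seminorms

section UnitTriples

variable {ι R : Type*} [Fintype ι] [CommRing R] {a : ι → MulRingSeminorm R} {w w' : Fin 3 → R}

variable (a) in
/-- A unit triple for a family of absolute values: the coordinates add up to zero, and their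
product satisfies the product formula, as for solutions of the `S`-unit equation `x + y + z = 0`. -/
structure IsUnitTriple (w : Fin 3 → R) : Prop where
  sum_eq_zero : ∑ i, w i = 0
  prod_eq_one : ∏ v, ∏ i, a v (w i) = 1

variable (a) in
/-- The logarithmic height of a triple, seen as a projective point. -/
noncomputable def height (w : Fin 3 → R) : ℝ :=
  ∑ v, log (maxVal (a v) w)

variable (a) in
/-- The quality of a triple: how close it is, over all absolute values together, to the three
points of the line `x + y + z = 0` with a vanishing coordinate. -/
noncomputable def quality (w : Fin 3 → R) : ℝ :=
  ∑ v, (log (maxVal (a v) w) - log (minVal (a v) w))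

variable (a) in
/-- The triple `w` is close, for each absolute value `a v`, to the point where the coordinate `c v`
vanishes, a share `Γ v` of its quality coming from `a v`. -/
def IsApprox (Γ : ι → ℝ) (c : ι → Fin 3) (w : Fin 3 → R) : Prop :=
  ∀ v, a v (w (c v)) ≤ maxVal (a v) w * exp (-(Γ v * quality a w))

namespace IsUnitTriple

lemma apply_pos (hw : IsUnitTriple a w) (v : ι) (i : Fin 3) : 0 < a v (w i) := by
  refine (apply_nonneg _ _).lt_of_ne' fun h => zero_ne_one' ℝ ?_
  rw [← hw.prod_eq_one, prod_eq_zero (mem_univ v) (prod_eq_zero (mem_univ i) h)]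

lemma maxVal_pos (hw : IsUnitTriple a w) (v : ι) : 0 < maxVal (a v) w :=
  (hw.apply_pos v 0).trans_le (le_maxVal w 0)

lemma minVal_pos (hw : IsUnitTriple a w) (v : ι) : 0 < minVal (a v) w := by
  obtain ⟨i, hi⟩ := exists_eq_ciInf_of_finite (f := fun i => a v (w i))
  exact (hw.apply_pos v i).trans_eq hi

lemma log_minVal_le_log_maxVal (hw : IsUnitTriple a w) (v : ι) :
    log (minVal (a v) w) ≤ log (maxVal (a v) w) :=
  Real.log_le_log (hw.minVal_pos v) ((minVal_le w 0).trans (le_maxVal w 0))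

lemma exp_height (hw : IsUnitTriple a w) : exp (height a w) = ∏ v, maxVal (a v) w := by
  rw [height, Real.exp_sum]
  exact prod_congr rfl fun v _ => Real.exp_log (hw.maxVal_pos v)

lemma three_mul_height_le (hw : IsUnitTriple a w) (ha : ∏ v, addConst (a v) ≤ 2) :
    3 * height a w ≤ quality a w + log 2 := by
  have hpos (v : ι) : 0 < maxVal (a v) w ^ 2 * minVal (a v) w :=
    mul_pos (pow_pos (hw.maxVal_pos v) 2) (hw.minVal_pos v)
  have hlocal : ∏ v, maxVal (a v) w ^ 2 * minVal (a v) w ≤ 2 :=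
    calc ∏ v, maxVal (a v) w ^ 2 * minVal (a v) w
      _ ≤ ∏ v, addConst (a v) * ∏ i, a v (w i) :=
          prod_le_prod (fun v _ => (hpos v).le) fun v _ => maxVal_sq_mul_minVal_le hw.sum_eq_zero
      _ ≤ 2 := by rwa [prod_mul_distrib, hw.prod_eq_one, mul_one]
  have hlog := Real.log_le_log (prod_pos fun v _ => hpos v) hlocal
  have hterm (v : ι) : log (maxVal (a v) w ^ 2 * minVal (a v) w) =
      3 * log (maxVal (a v) w) - (log (maxVal (a v) w) - log (minVal (a v) w)) := by
    rw [Real.log_mul (pow_pos (hw.maxVal_pos v) 2).ne' (hw.minVal_pos v).ne', Real.log_pow]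
    push_cast
    ring
  rw [Real.log_prod fun v _ => (hpos v).ne', sum_congr rfl fun v _ => hterm v, sum_sub_distrib,
    ← mul_sum] at hlog
  rw [height, quality]
  linarith

lemma map_padeDet_le_of_isApprox (hw : IsUnitTriple a w) (hw' : IsUnitTriple a w') {Γ : ι → ℝ}
    {c : ι → Fin 3} (h : IsApprox a Γ c w) (h' : IsApprox a Γ c w') (m : ℕ) {v : ι}
    (hΓ : 0 ≤ Γ v) :
    a v (padeDet m w w') ≤ addConst (a v) ^ (3 * m + 1) *
      (maxVal (a v) w' * maxVal (a v) w ^ (3 * m + 1) *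
        exp (-(Γ v * min (quality a w') ((2 * m + 1) * quality a w)))) := by
  have hmax := hw.maxVal_pos v
  have hmax' := hw'.maxVal_pos v
  refine map_padeDet_le hw.sum_eq_zero hw'.sum_eq_zero (i := c v) ?_ ?_
  · refine (pow_le_pow_left₀ (apply_nonneg _ _) (h v) _).trans ?_
    rw [mul_pow, ← Real.exp_nat_mul]
    have hmin := mul_le_mul_of_nonneg_left
      (min_le_right (quality a w') ((2 * m + 1) * quality a w)) hΓ
    gcongr
    push_cast
    linarith
  · refine (h' v).trans ?_
    gcongr
    exact min_le_left _ _

lemma sum_mul_min_quality_le (hw : IsUnitTriple a w) (hw' : IsUnitTriple a w')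
    (ha : ∏ v, addConst (a v) ≤ 2) {Γ : ι → ℝ} (hΓ : ∀ v, 0 ≤ Γ v) {c : ι → Fin 3}
    (h : IsApprox a Γ c w) (h' : IsApprox a Γ c w') {m : ℕ}
    (hdet : 1 ≤ ∏ v, a v (padeDet m w w')) :
    (∑ v, Γ v) * min (quality a w') ((2 * m + 1) * quality a w) ≤
      height a w' + (3 * m + 1) * height a w + (3 * m + 1) * log 2 := by
  have hlocal (v : ι) := map_padeDet_le_of_isApprox hw hw' h h' m (hΓ v)
  set μ := min (quality a w') ((2 * m + 1) * quality a w)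
  have hglobal : 1 ≤ 2 ^ (3 * m + 1) *
      exp (height a w' + (3 * m + 1 : ℕ) * height a w - (∑ v, Γ v) * μ) :=
    calc 1 ≤ ∏ v, a v (padeDet m w w') := hdet
      _ ≤ ∏ v, addConst (a v) ^ (3 * m + 1) *
          (maxVal (a v) w' * maxVal (a v) w ^ (3 * m + 1) * exp (-(Γ v * μ))) :=
          prod_le_prod (fun v _ => apply_nonneg _ _) fun v _ => hlocal v
      _ = (∏ v, addConst (a v)) ^ (3 * m + 1) *
          exp (height a w' + (3 * m + 1 : ℕ) * height a w - (∑ v, Γ v) * μ) := by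
          rw [sub_eq_add_neg, Real.exp_add, Real.exp_add, Real.exp_nat_mul, hw.exp_height,
            hw'.exp_height, sum_mul, ← sum_neg_distrib, Real.exp_sum]
          simp only [prod_mul_distrib, prod_pow]
      _ ≤ _ := by
          have : 0 ≤ ∏ v, addConst (a v) :=
            prod_nonneg fun v _ => (one_le_addConst (a v)).trans' zero_le_one
          gcongr
  have hlog := Real.log_nonneg hglobal
  rw [Real.log_mul (by positivity) (Real.exp_ne_zero _), Real.log_exp, Real.log_pow] at hlog
  push_cast at hlog
  linarith

end IsUnitTriple

variable (a) in
/-- A set of unit triples to which the method of Padé approximation applies: the determinants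
attached to its elements satisfy Liouville's inequality. -/
structure IsLiouvilleSet (W : Set (Fin 3 → R)) : Prop where
  isUnitTriple : ∀ w ∈ W, IsUnitTriple a w
  map_natCast_ne_zero : ∀ v, ∀ n : ℕ, n ≠ 0 → a v n ≠ 0
  prod_addConst_le : ∏ v, addConst (a v) ≤ 2
  eq_zero_or_one_le : ∀ w ∈ W, ∀ w' ∈ W, ∀ m,
    (∀ v, a v (padeDet m w w') = 0) ∨ 1 ≤ ∏ v, a v (padeDet m w w')
  one_le_padeDet_zero : ∀ w ∈ W, ∀ w' ∈ W, w ≠ w' → 1 ≤ ∏ v, a v (padeDet 0 w w')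

namespace IsLiouvilleSet

variable {W : Set (Fin 3 → R)} {Γ : ι → ℝ} {c : ι → Fin 3}

lemma mono (hW : IsLiouvilleSet a W) {W' : Set (Fin 3 → R)} (h : W' ⊆ W) : IsLiouvilleSet a W' where
  isUnitTriple w hw := hW.isUnitTriple w (h hw)
  map_natCast_ne_zero := hW.map_natCast_ne_zero
  prod_addConst_le := hW.prod_addConst_le
  eq_zero_or_one_le w hw w' hw' := hW.eq_zero_or_one_le w (h hw) w' (h hw')
  one_le_padeDet_zero w hw w' hw' := hW.one_le_padeDet_zero w (h hw) w' (h hw')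

lemma min_quality_le (hW : IsLiouvilleSet a W) (hw : w ∈ W) (hw' : w' ∈ W) (hΓ : ∀ v, 0 ≤ Γ v)
    (hsum : ∑ v, Γ v = 6 / 7) (h : IsApprox a Γ c w) (h' : IsApprox a Γ c w') {m : ℕ}
    (hdet : 1 ≤ ∏ v, a v (padeDet m w w')) :
    18 / 7 * min (quality a w') ((2 * m + 1) * quality a w) ≤
      quality a w' + (3 * m + 1) * quality a w + (12 * m + 5) * log 2 := by
  have hmain := (hW.isUnitTriple w hw).sum_mul_min_quality_le (hW.isUnitTriple w' hw')
    hW.prod_addConst_le hΓ h h' hdet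
  have hheight := mul_le_mul_of_nonneg_left
    ((hW.isUnitTriple w hw).three_mul_height_le hW.prod_addConst_le)
    (show (0 : ℝ) ≤ 3 * m + 1 by positivity)
  have hheight' := (hW.isUnitTriple w' hw').three_mul_height_le hW.prod_addConst_le
  rw [hsum] at hmain
  linarith

lemma quality_gap (hW : IsLiouvilleSet a W) (hw : w ∈ W) (hw' : w' ∈ W) (hΓ : ∀ v, 0 ≤ Γ v)
    (hsum : ∑ v, Γ v = 6 / 7) (h : IsApprox a Γ c w) (h' : IsApprox a Γ c w')
    (hlarge : 100 * log 2 ≤ quality a w) (hne : w ≠ w') (hle : quality a w ≤ quality a w') :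
    38 / 25 * quality a w ≤ quality a w' := by
  have hmin := hW.min_quality_le hw hw' hΓ hsum h h' (hW.one_le_padeDet_zero w hw w' hw' hne)
  simp only [Nat.cast_zero, mul_zero, zero_add, one_mul, min_eq_right hle] at hmin
  linarith

lemma quality_eq_zero_of_padeDet_eq_zero (hW : IsLiouvilleSet a W) (hw : w ∈ W) (hw' : w' ∈ W)
    {m : ℕ} (h : ∀ v, a v (padeDet m w w') = 0) (h' : ∀ v, a v (padeDet (m + 1) w w') = 0) :
    quality a w = 0 := by
  have hunit := hW.isUnitTriple w hw
  refine sum_eq_zero fun v _ => ?_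
  have hstep := map_eq_of_padeDet_eq_zero (hW.map_natCast_ne_zero v) hunit.sum_eq_zero
    (fun i => (hunit.apply_pos v i).ne') ((hW.isUnitTriple w' hw').apply_pos v 0).ne' (h v) (h' v)
  have hconst (i : Fin 3) : a v (w i) = a v (w 0) := by
    fin_cases i
    exacts [rfl, hstep 0, (hstep 1).trans (hstep 0)]
  simp [maxVal, minVal, hconst]

lemma padeDet_eq_zero (hW : IsLiouvilleSet a W) (hw : w ∈ W) (hw' : w' ∈ W) (hΓ : ∀ v, 0 ≤ Γ v)
    (hsum : ∑ v, Γ v = 6 / 7) (h : IsApprox a Γ c w) (h' : IsApprox a Γ c w')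
    (hlarge : 200 * log 2 ≤ quality a w) {m : ℕ}
    (hlow : 7 / 11 * (3 * m + 1 + (12 * m + 5) / 200) * quality a w < quality a w')
    (hupp : quality a w' < ((15 * m + 11) / 7 - (12 * m + 5) / 200) * quality a w) (v : ι) :
    a v (padeDet m w w') = 0 := by
  refine (hW.eq_zero_or_one_le w hw w' hw' m).resolve_right (fun hdet => ?_) v
  have hmin := hW.min_quality_le hw hw' hΓ hsum h h' hdet
  have hlog : (12 * m + 5) * log 2 ≤ (12 * m + 5) * (quality a w / 200) := by
    gcongr
    linarith
  rcases min_choice (quality a w') ((2 * m + 1) * quality a w) with hm | hm <;> rw [hm] at hmin <;>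
    linarith

lemma quality_le (hW : IsLiouvilleSet a W) (hw : w ∈ W) (hw' : w' ∈ W) (hΓ : ∀ v, 0 ≤ Γ v)
    (hsum : ∑ v, Γ v = 6 / 7) (h : IsApprox a Γ c w) (h' : IsApprox a Γ c w')
    (hlarge : 200 * log 2 ≤ quality a w) : quality a w' ≤ 48 * quality a w := by
  have hpos : 0 < quality a w := by linarith [Real.log_pos one_lt_two]
  obtain ⟨r, hr⟩ : ∃ r, quality a w' = r * quality a w :=
    ⟨_, (div_mul_cancel₀ _ hpos.ne').symm⟩
  rw [hr]
  refine mul_le_mul_of_nonneg_right (le_of_not_gt fun hr48 => ?_) hpos.le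
  set m := ⌊(r - 7 / 5) / 2⌋₊
  have hm : (23 : ℝ) ≤ m := by
    exact_mod_cast Nat.le_floor (by norm_num; linarith : ((23 : ℕ) : ℝ) ≤ (r - 7 / 5) / 2)
  have hmr : m ≤ (r - 7 / 5) / 2 := Nat.floor_le (by linarith)
  have hrm : (r - 7 / 5) / 2 < m + 1 := Nat.lt_floor_add_one _
  have hdet {k : ℕ} (hlow : 7 / 11 * (3 * k + 1 + (12 * k + 5) / 200) < r)
      (hupp : r < (15 * k + 11) / 7 - (12 * k + 5) / 200) (v : ι) : a v (padeDet k w w') = 0 :=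
    hW.padeDet_eq_zero hw hw' hΓ hsum h h' hlarge (by rw [hr]; gcongr) (by rw [hr]; gcongr) v
  refine hpos.ne' (hW.quality_eq_zero_of_padeDet_eq_zero hw hw' (m := m) (hdet ?_ ?_) (hdet ?_ ?_))
    <;> push_cast <;> linarith

end IsLiouvilleSet

end UnitTriples

section Gaps

variable {α : Type*} {f : α → ℝ} {q : ℝ}

lemma card_le_of_gap (hq : 0 ≤ q) (k : ℕ) (T : Finset α)
    (hgap : ∀ x ∈ T, ∀ y ∈ T, x ≠ y → f x ≤ f y → q * f x ≤ f y)
    (hlt : ∀ x ∈ T, ∀ y ∈ T, f y < q ^ k * f x) : #T ≤ k := by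
  classical
  induction k generalizing T with
  | zero =>
    rw [nonpos_iff_eq_zero, card_eq_zero, eq_empty_iff_forall_notMem]
    intro x hx
    simpa using hlt x hx x hx
  | succ k ih =>
    rcases T.eq_empty_or_nonempty with rfl | hT
    · simp
    obtain ⟨x, hx, hmin⟩ := exists_min_image T f hT
    have herase : #(T.erase x) ≤ k := by
      refine ih _ (fun y hy z hz => hgap y (mem_of_mem_erase hy) z (mem_of_mem_erase hz))
        fun y hy z hz => ?_
      obtain ⟨hyx, hyT⟩ := mem_erase.mp hy
      calc f z < q ^ (k + 1) * f x := hlt x hx z (mem_of_mem_erase hz)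
        _ = q ^ k * (q * f x) := by ring
        _ ≤ q ^ k * f y := by
            gcongr
            exact hgap x hx y hyT hyx.symm (hmin y hyT)
    have := card_erase_add_one hx
    omega

end Gaps

section Classes

variable {ι : Type*} [Fintype ι]

lemma exists_weights {l : ι → ℝ} (hl : ∀ v, 0 ≤ l v) (hsum : 0 < ∑ v, l v) (n : ℕ) :
    ∃ k : ι → ℕ, ∑ v, k v = n ∧
      ∀ v, k v / (n + Fintype.card ι : ℝ) * ∑ v, l v ≤ l v := by
  have hd : (0 : ℝ) < n + Fintype.card ι := by
    have hne : (univ : Finset ι).Nonempty := nonempty_of_sum_ne_zero hsum.ne'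
    exact add_pos_of_nonneg_of_pos (by positivity) (by exact_mod_cast hne.card_pos)
  set d : ℝ := n + Fintype.card ι
  let f : ι →₀ ℕ := Finsupp.equivFunOnFinite.symm fun v => ⌊d * l v / ∑ v, l v⌋₊
  have hf : n ≤ f.degree := by
    have hfloor : ∑ v, (d * l v / ∑ v, l v - 1) ≤ ∑ v, (f v : ℝ) :=
      sum_le_sum fun v _ => (Nat.sub_one_lt_floor _).le
    rw [sum_sub_distrib, ← sum_div, ← mul_sum, mul_div_cancel_right₀ _ hsum.ne'] at hfloor
    rw [Finsupp.degree_eq_sum]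
    simp only [sum_const, card_univ, nsmul_eq_mul, mul_one, d, add_sub_cancel_right] at hfloor
    exact_mod_cast hfloor
  obtain ⟨k, hkf, hk⟩ := Finsupp.exists_le_degree_eq f n hf
  refine ⟨k, by rw [← hk, Finsupp.degree_eq_sum], fun v => ?_⟩
  have hkv : (k v : ℝ) ≤ d * l v / ∑ v, l v :=
    (Nat.cast_le.mpr (hkf v)).trans
      (Nat.floor_le (div_nonneg (mul_nonneg hd.le (hl v)) hsum.le))
  rw [le_div_iff₀ hsum] at hkv
  rw [div_mul_eq_mul_div, div_le_iff₀ hd]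
  linarith

/-- The possible contributions of one absolute value to an approximation class: a weight at most
`n` and the coordinate which is small. The coordinate is irrelevant when the weight is zero, and is
then normalised to `0`, without which the count of the classes would exceed the bound. -/
def localClasses (n : ℕ) : Finset (ℕ × Fin 3) :=
  insert (0, 0) (Ico 1 (n + 1) ×ˢ univ)

variable (ι) in
open Classical in
/-- The approximation classes of total weight `n`: integral weights, together with the small
coordinate, for each absolute value. -/
noncomputable def approxClasses (n : ℕ) : Finset (ι → ℕ × Fin 3) :=
  {g ∈ Fintype.piFinset fun _ => localClasses n | ∑ v, (g v).1 = n}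

lemma mem_approxClasses {n : ℕ} {g : ι → ℕ × Fin 3} :
    g ∈ approxClasses ι n ↔ (∀ v, g v ∈ localClasses n) ∧ ∑ v, (g v).1 = n := by
  simp [approxClasses]

lemma sum_localClasses_pow_le {x : ℝ} (hx₀ : 0 ≤ x) (hx₁ : x < 1) (n : ℕ) :
    ∑ b ∈ localClasses n, x ^ b.1 ≤ 1 + 3 * (x / (1 - x)) := by
  have hgeom := geom_sum_Ico_le_of_lt_one (m := 1) (n := n + 1) hx₀ hx₁
  rw [localClasses, sum_insert (by simp), sum_product]
  simp only [pow_zero, sum_const, card_univ, Fintype.card_fin, nsmul_eq_mul, ← mul_sum,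
    Nat.cast_ofNat]
  rw [pow_one] at hgeom
  gcongr

/-- The generating function of the classes is a product of one geometric series for each absolute
value. -/
lemma card_approxClasses_mul_pow_le {x : ℝ} (hx₀ : 0 ≤ x) (hx₁ : x < 1) (n : ℕ) :
    #(approxClasses ι n) * x ^ n ≤ (1 + 3 * (x / (1 - x))) ^ Fintype.card ι := by
  classical
  calc #(approxClasses ι n) * x ^ n
    _ = ∑ g ∈ approxClasses ι n, ∏ v, x ^ (g v).1 := by
        rw [← nsmul_eq_mul, ← sum_const]
        refine sum_congr rfl fun g hg => ?_
        rw [prod_pow_eq_pow_sum, (mem_approxClasses.mp hg).2]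
    _ ≤ ∑ g ∈ Fintype.piFinset fun _ : ι => localClasses n, ∏ v, x ^ (g v).1 := by
        refine sum_le_sum_of_subset_of_nonneg (fun g hg => ?_) fun g _ _ => by positivity
        exact Fintype.mem_piFinset.mpr (mem_approxClasses.mp hg).1
    _ = ∏ _v : ι, ∑ b ∈ localClasses n, x ^ b.1 :=
        (prod_univ_sum (fun _ : ι => localClasses n) fun _ b => x ^ b.1).symm
    _ ≤ ∏ _v : ι, (1 + 3 * (x / (1 - x))) :=
        prod_le_prod (fun _ _ => sum_nonneg fun _ _ => by positivity)
          fun _ _ => sum_localClasses_pow_le hx₀ hx₁ n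
    _ = _ := by rw [prod_const, card_univ]

lemma card_approxClasses_le :
    #(approxClasses ι (6 * Fintype.card ι)) ≤ ((25 / 21 : ℝ) ^ 6 * (67 / 4)) ^ Fintype.card ι := by
  -- `21 / 25` nearly minimises `(1 + 3 x / (1 - x)) / x ^ 6`, which has to be less than `7 ^ 2`.
  have h := card_approxClasses_mul_pow_le (ι := ι) (x := 21 / 25) (by norm_num) (by norm_num)
    (6 * Fintype.card ι)
  rw [← le_div_iff₀ (by positivity), pow_mul, ← div_pow] at h
  exact h.trans_eq (by norm_num)

end Classes

section LargeQuality

variable {ι R : Type*} [Fintype ι] [CommRing R] {a : ι → MulRingSeminorm R}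

lemma IsUnitTriple.exists_isApprox {w : Fin 3 → R} (hw : IsUnitTriple a w)
    (hpos : 0 < quality a w) (n : ℕ) :
    ∃ g ∈ approxClasses ι n,
      IsApprox a (fun v => (g v).1 / (n + Fintype.card ι : ℝ)) (fun v => (g v).2) w := by
  obtain ⟨k, hsum, hk⟩ :=
    exists_weights (fun v => sub_nonneg.mpr (hw.log_minVal_le_log_maxVal v)) hpos n
  choose c hc using fun v => exists_eq_ciInf_of_finite (f := fun i => a v (w i))
  refine ⟨fun v => (k v, if k v = 0 then 0 else c v), ?_, fun v => ?_⟩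
  · refine mem_approxClasses.mpr ⟨fun v => ?_, hsum⟩
    have hkn : k v ≤ n := hsum ▸ single_le_sum (fun _ _ => Nat.zero_le _) (mem_univ v)
    by_cases h : k v = 0
    · simp [localClasses, h]
    · simp [localClasses, h]
      omega
  · by_cases h : k v = 0
    · simpa [h] using le_maxVal w 0
    · have hmin : a v (w (c v)) = minVal (a v) w := hc v
      have hv := hk v
      simp only [h, if_false]
      rw [hmin, ← Real.exp_log (hw.minVal_pos v), ← Real.exp_log (hw.maxVal_pos v), ← Real.exp_add,
        quality]
      gcongr
      linarith

namespace IsLiouvilleSet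

variable {T : Finset (Fin 3 → R)}

lemma card_le_of_isApprox (hT : IsLiouvilleSet a (T : Set (Fin 3 → R))) {Γ : ι → ℝ}
    (hΓ : ∀ v, 0 ≤ Γ v) (hsum : ∑ v, Γ v = 6 / 7) {c : ι → Fin 3}
    (happrox : ∀ w ∈ T, IsApprox a Γ c w) (hlarge : ∀ w ∈ T, 100 * log 2 ≤ quality a w) :
    #T ≤ 12 := by
  classical
  have hlog := Real.log_pos one_lt_two
  have hgap : ∀ w ∈ T, ∀ w' ∈ T, w ≠ w' → quality a w ≤ quality a w' →
      38 / 25 * quality a w ≤ quality a w' := fun w hw w' hw' hne hle =>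
    hT.quality_gap hw hw' hΓ hsum (happrox w hw) (happrox w' hw') (hlarge w hw) hne hle
  have hmoderate : #{w ∈ T | quality a w < 200 * log 2} ≤ 2 := by
    refine card_le_of_gap (f := quality a) (q := 38 / 25) (by norm_num) 2 _
      (fun w hw w' hw' => hgap w (mem_filter.mp hw).1 w' (mem_filter.mp hw').1)
      fun w hw w' hw' => ?_
    linarith [hlarge w (mem_filter.mp hw).1, (mem_filter.mp hw').2]
  have hhuge : #{w ∈ T | ¬quality a w < 200 * log 2} ≤ 10 := by
    refine card_le_of_gap (f := quality a) (q := 38 / 25) (by norm_num) 10 _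
      (fun w hw w' hw' => hgap w (mem_filter.mp hw).1 w' (mem_filter.mp hw').1)
      fun w hw w' hw' => ?_
    obtain ⟨hwT, hwq⟩ := mem_filter.mp hw
    have hw'T := (mem_filter.mp hw').1
    linarith [hT.quality_le hwT hw'T hΓ hsum (happrox w hwT) (happrox w' hw'T) (not_lt.mp hwq)]
  have := card_filter_add_card_filter_not (s := T) fun w => quality a w < 200 * log 2
  omega

lemma card_le_of_large_quality (hT : IsLiouvilleSet a (T : Set (Fin 3 → R)))
    (hlarge : ∀ w ∈ T, 100 * log 2 ≤ quality a w) :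
    #T ≤ 12 * ((25 / 21 : ℝ) ^ 6 * (67 / 4)) ^ Fintype.card ι := by
  classical
  have hlog := Real.log_pos one_lt_two
  choose! g hg happrox using fun w (hw : w ∈ T) =>
    (hT.isUnitTriple w hw).exists_isApprox (by linarith [hlarge w hw]) (6 * Fintype.card ι)
  have hfiber : ∀ b ∈ approxClasses ι (6 * Fintype.card ι), #{w ∈ T | g w = b} ≤ 12 := by
    intro b hb
    rcases isEmpty_or_nonempty ι with hι | hι
    · have hempty : T = ∅ := eq_empty_iff_forall_notMem.mpr fun w hw => by
        have := hlarge w hw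
        rw [quality, univ_eq_empty, sum_empty] at this
        linarith
      simp [hempty]
    refine card_le_of_isApprox (hT.mono (coe_subset.mpr (filter_subset _ _)))
      (Γ := fun v => (b v).1 / ((6 * Fintype.card ι : ℕ) + Fintype.card ι : ℝ))
      (c := fun v => (b v).2) (fun v => by positivity) ?_ (fun w hw => ?_)
      fun w hw => hlarge w (mem_filter.mp hw).1
    · rw [← sum_div, ← Nat.cast_sum, (mem_approxClasses.mp hb).2]
      field_simp
      push_cast
      ring
    · obtain ⟨hwT, rfl⟩ := mem_filter.mp hw
      exact happrox w hwT
  calc (#T : ℝ) ≤ (12 * #(approxClasses ι (6 * Fintype.card ι)) : ℕ) := by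
        exact_mod_cast card_le_mul_card_image_of_maps_to hg 12 hfiber
    _ ≤ _ := by
        push_cast
        gcongr
        exact card_approxClasses_le

end IsLiouvilleSet

end LargeQuality

section Places

variable {R : Type*} [CommRing R] {P : Finset ℕ} {k : ℕ}

lemma prod_pow_factorization_of_mem_factoredNumbers (hk : k ∈ Nat.factoredNumbers P) :
    ∏ p ∈ P, p ^ k.factorization p = k := by
  conv_rhs => rw [← Nat.prod_factorization_pow_eq_self (Nat.ne_zero_of_mem_factoredNumbers hk)]
  exact (Finsupp.prod_of_support_subset _ (Nat.primeFactors_subset_of_mem_factoredNumbers hk) _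
    fun p _ => pow_zero p).symm

lemma prod_pow_factorization_le (hP : ∀ p ∈ P, p.Prime) (hk : k ≠ 0) :
    ∏ p ∈ P, p ^ k.factorization p ≤ k :=
  calc ∏ p ∈ P, p ^ k.factorization p
    _ ≤ ∏ p ∈ P ∪ k.primeFactors, p ^ k.factorization p := by
        refine prod_le_prod_of_subset_of_one_le' subset_union_left fun p hp _ => ?_
        rcases mem_union.mp hp with hp | hp
        exacts [Nat.one_le_pow _ _ (hP p hp).pos,
          Nat.one_le_pow _ _ (Nat.pos_of_mem_primeFactors hp)]
    _ = k := prod_pow_factorization_of_mem_factoredNumbers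
        (Nat.mem_factoredNumbers_of_primeFactors_subset hk subset_union_right)

lemma padicNorm_intCast {p : ℕ} (hp : p.Prime) {k : ℤ} (hk : k ≠ 0) :
    padicNorm p k = ((p : ℚ) ^ k.natAbs.factorization p)⁻¹ := by
  rw [padicNorm.eq_zpow_of_nonzero (Int.cast_ne_zero.mpr hk), padicValRat.of_int, padicValInt,
    zpow_neg, zpow_natCast, Nat.factorization_def _ hp]

lemma prod_padicNorm_intCast (hP : ∀ p ∈ P, p.Prime) {k : ℤ} (hk : k ≠ 0) :
    ∏ p ∈ P, padicNorm p k = ((∏ p ∈ P, p ^ k.natAbs.factorization p : ℕ) : ℚ)⁻¹ := by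
  push_cast
  rw [← prod_inv_distrib]
  exact prod_congr rfl fun p hp => padicNorm_intCast (hP p hp) hk

lemma one_le_max_padicNorm_of_isCoprime {p : ℕ} (hp : p.Prime) {x y : ℤ} (hxy : IsCoprime x y) :
    1 ≤ max (padicNorm p x) (padicNorm p y) := by
  have : Fact p.Prime := ⟨hp⟩
  by_cases hx : (p : ℤ) ∣ x
  · refine le_max_of_le_right ((padicNorm.int_eq_one_iff y).mpr fun hy => ?_).ge
    exact (Nat.prime_iff_prime_int.mp hp).not_isUnit (hxy.isUnit_of_dvd' hx hy)
  · exact le_max_of_le_left ((padicNorm.int_eq_one_iff x).mpr hx).ge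

/-- A family of absolute values on `R` extending those of `ℤ` at the infinite place, indexed by
`none`, and at the places in the set of primes `P`. -/
structure ExtendsPlaces (a : Option P → MulRingSeminorm R) : Prop where
  prime : ∀ p ∈ P, p.Prime
  map_intCast_none (k : ℤ) : a none k = |(k : ℝ)|
  map_intCast_some (p : P) (k : ℤ) : a (some p) k = padicNorm p k
  isNonarchimedean_some (p : P) : IsNonarchimedean (a (some p))

namespace ExtendsPlaces

variable {a : Option P → MulRingSeminorm R} {k x y : ℤ}

lemma map_intCast_ne_zero (ha : ExtendsPlaces a) (hk : k ≠ 0) (v : Option P) : a v k ≠ 0 := by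
  rcases v with _ | p
  · simpa [ha.map_intCast_none] using hk
  · have : Fact (p : ℕ).Prime := ⟨ha.prime p p.2⟩
    rw [ha.map_intCast_some]
    exact_mod_cast padicNorm.nonzero (Int.cast_ne_zero.mpr hk)

lemma prod_map_intCast (ha : ExtendsPlaces a) (hk : k ≠ 0) :
    ∏ v, a v k = k.natAbs / (∏ p ∈ P, p ^ k.natAbs.factorization p : ℕ) := by
  have hprod := congrArg (Rat.cast : ℚ → ℝ) (prod_padicNorm_intCast ha.prime hk)
  rw [← prod_coe_sort] at hprod
  rw [Fintype.prod_option, ha.map_intCast_none, prod_congr rfl fun p _ => ha.map_intCast_some p k,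
    ← Rat.cast_prod, hprod, Nat.cast_natAbs, div_eq_mul_inv]
  push_cast
  rfl

lemma one_le_prod_map_intCast (ha : ExtendsPlaces a) (hk : k ≠ 0) : 1 ≤ ∏ v, a v k := by
  have hpos : 0 < ∏ p ∈ P, p ^ k.natAbs.factorization p :=
    prod_pos fun p hp => pow_pos (ha.prime p hp).pos _
  rw [ha.prod_map_intCast hk, one_le_div (by exact_mod_cast hpos)]
  exact_mod_cast prod_pow_factorization_le ha.prime (Int.natAbs_ne_zero.mpr hk)

lemma prod_map_intCast_eq_one (ha : ExtendsPlaces a) (hk : k.natAbs ∈ Nat.factoredNumbers P) :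
    ∏ v, a v k = 1 := by
  have hk0 := Nat.ne_zero_of_mem_factoredNumbers hk
  rw [ha.prod_map_intCast (Int.natAbs_ne_zero.mp hk0),
    prod_pow_factorization_of_mem_factoredNumbers hk, div_self (Nat.cast_ne_zero.mpr hk0)]

lemma max_abs_le_prod_max (ha : ExtendsPlaces a) (hxy : IsCoprime x y) :
    max |(x : ℝ)| |(y : ℝ)| ≤ ∏ v, max (a v x) (a v y) := by
  rw [Fintype.prod_option, ha.map_intCast_none, ha.map_intCast_none]
  refine le_mul_of_one_le_right (by positivity) (one_le_prod fun p _ => ?_)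
  rw [ha.map_intCast_some, ha.map_intCast_some]
  exact_mod_cast one_le_max_padicNorm_of_isCoprime (ha.prime p p.2) hxy

lemma prod_addConst_le (ha : ExtendsPlaces a) : ∏ v, addConst (a v) ≤ 2 := by
  have hnone : addConst (a none) ≤ 2 := by
    rw [addConst]
    split_ifs <;> norm_num
  have hsome (p : P) : addConst (a (some p)) = 1 := if_pos (ha.isNonarchimedean_some p)
  rwa [Fintype.prod_option, prod_eq_one fun p _ => hsome p, mul_one]

end ExtendsPlaces

/-- The absolute value on a ring induced by a homomorphism to a normed field. -/
def seminormOfHom {K : Type*} [NormedField K] (φ : R →+* K) : MulRingSeminorm R where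
  toFun x := ‖φ x‖
  map_zero' := by simp
  map_one' := by simp
  map_mul' := by simp
  neg' := by simp
  add_le' x y := by simpa using norm_add_le (φ x) (φ y)

lemma nonempty_zsqrtd_ringHom (N : ℤ) (K : Type*) [Field K] [IsAlgClosed K] :
    Nonempty (ℤ√N →+* K) := by
  obtain ⟨r, hr⟩ := IsAlgClosed.exists_pow_nat_eq (N : K) two_pos
  exact ⟨Zsqrtd.lift ⟨r, by rw [← hr, sq]⟩⟩

lemma exists_extendsPlaces (N : ℤ) (hP : ∀ p ∈ P, p.Prime) :
    ∃ a : Option P → MulRingSeminorm (ℤ√N), ExtendsPlaces a := by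
  have hlocal (p : P) : ∃ b : MulRingSeminorm (ℤ√N),
      (∀ k : ℤ, b k = padicNorm p k) ∧ IsNonarchimedean b := by
    have : Fact (p : ℕ).Prime := ⟨hP p p.2⟩
    obtain ⟨φ⟩ := nonempty_zsqrtd_ringHom N (PadicAlgCl p)
    refine ⟨seminormOfHom φ, fun k => ?_, fun x y => ?_⟩
    · change ‖φ k‖ = _
      rw [map_intCast, ← map_intCast (algebraMap ℚ_[p] (PadicAlgCl p)), PadicAlgCl.norm_extends,
        ← Padic.eq_padicNorm, Rat.cast_intCast]
    · change ‖φ (x + y)‖ ≤ _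
      rw [map_add]
      exact PadicAlgCl.isNonarchimedean p _ _
  choose b hb hb' using hlocal
  obtain ⟨φ⟩ := nonempty_zsqrtd_ringHom N ℂ
  refine ⟨fun v => v.elim (seminormOfHom φ) b, hP, fun k => ?_, hb, hb'⟩
  change ‖φ k‖ = _
  rw [map_intCast, Complex.norm_intCast]

end Places

section Conjugation

lemma padeDet_neg_swap {R : Type*} [CommRing R] (m : ℕ) (w w' : Fin 3 → R) :
    padeDet m ![-w 1, -w 0, -w 2] ![-w' 1, -w' 0, -w' 2] = -padeDet m w w' := by
  have hsign : (-1 : R) ^ (m + 1) * (-1) ^ m = -1 := by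
    rw [← pow_add, Odd.neg_one_pow ⟨m, by ring⟩]
  change -w' 1 * pade m (-w 0) (-w 2) (-w 1) - -w' 0 * pade m (-w 1) (-w 0) (-w 2) = _
  rw [pade_neg, pade_neg, pade_swap m (w 0) (w 1), pade_swap m (w 1) (w 2), padeDet]
  linear_combination
    (w' 0 * pade m (w 1) (w 2) (w 0) - w' 1 * pade m (w 0) (w 1) (w 2)) * hsign

variable {N : ℤ} {P : Finset ℕ} {a : Option P → MulRingSeminorm (ℤ√N)} {x : ℤ√N}

lemma map_norm_of_star_eq_neg (b : MulRingSeminorm (ℤ√N)) (hx : star x = -x) :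
    b (x.norm : ℤ√N) = b x ^ 2 := by
  rw [Zsqrtd.norm_eq_mul_conj, hx, map_mul, map_neg_eq_map, sq]

lemma ExtendsPlaces.one_le_prod_of_norm_ne_zero (ha : ExtendsPlaces a) (hx : star x = -x)
    (hnorm : x.norm ≠ 0) : 1 ≤ ∏ v, a v x := by
  have hsq := ha.one_le_prod_map_intCast hnorm
  simp only [map_norm_of_star_eq_neg _ hx, prod_pow] at hsq
  exact (one_le_sq_iff₀ (prod_nonneg fun v _ => apply_nonneg _ _)).mp hsq

lemma ExtendsPlaces.eq_zero_or_one_le_prod (ha : ExtendsPlaces a) (hx : star x = -x) :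
    (∀ v, a v x = 0) ∨ 1 ≤ ∏ v, a v x := by
  refine or_iff_not_imp_right.mpr fun hlt v => ?_
  have hnorm : x.norm = 0 := of_not_not fun h => hlt (ha.one_le_prod_of_norm_ne_zero hx h)
  have hsq := map_norm_of_star_eq_neg (a v) hx
  rw [hnorm, Int.cast_zero, map_zero] at hsq
  exact eq_zero_of_pow_eq_zero hsq.symm

end Conjugation

section CubicOrdinates

/-- The ordinates of the integral points `(D, Y)` on `Y ^ 2 = 4 * D ^ 3 + N` such that only primes
in `P` divide `D`. -/
def cubicOrdinates (N : ℤ) (P : Finset ℕ) : Set ℤ :=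
  {Y | ∃ D : ℤ, Y ^ 2 = 4 * D ^ 3 + N ∧ D.natAbs ∈ Nat.factoredNumbers P}

/-- The triple `(Y - √N, -Y - √N, 2√N)` that an integral point `(D, Y)` on `Y ^ 2 = 4 * D ^ 3 + N`
gives rise to. -/
def triple (N Y : ℤ) : Fin 3 → ℤ√N :=
  ![⟨Y, -1⟩, ⟨-Y, -1⟩, ⟨0, 2⟩]

variable {N Y Y' D : ℤ} {P : Finset ℕ} {a : Option P → MulRingSeminorm (ℤ√N)}

lemma triple_injective (N : ℤ) : Function.Injective (triple N) := fun _ _ h =>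
  congrArg Zsqrtd.re (congrFun h 0)

lemma sum_triple (N Y : ℤ) : ∑ i, triple N Y i = 0 := by
  rw [Fin.sum_univ_three]
  ext <;> simp [triple]

lemma triple_zero_mul_triple_one (h : Y ^ 2 = 4 * D ^ 3 + N) :
    triple N Y 0 * triple N Y 1 = -((4 * D ^ 3 : ℤ) : ℤ√N) := by
  ext
  · simp only [triple, Matrix.cons_val, Zsqrtd.re_mul, Zsqrtd.re_neg, Zsqrtd.re_intCast]
    linear_combination -h
  · simp only [triple, Matrix.cons_val, Zsqrtd.im_mul, Zsqrtd.im_neg, Zsqrtd.im_intCast]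
    ring

lemma triple_two_mul_self (N Y : ℤ) : triple N Y 2 * triple N Y 2 = ((4 * N : ℤ) : ℤ√N) := by
  ext
  · simp only [triple, Matrix.cons_val, Zsqrtd.re_mul, Zsqrtd.re_intCast]
    ring
  · simp only [triple, Matrix.cons_val, Zsqrtd.im_mul, Zsqrtd.im_intCast]
    ring

lemma star_padeDet_triple (m : ℕ) (Y Y' : ℤ) :
    star (padeDet m (triple N Y) (triple N Y')) = -padeDet m (triple N Y) (triple N Y') := by
  have hstar (Y : ℤ) :
      starRingEnd (ℤ√N) ∘ triple N Y = ![-triple N Y 1, -triple N Y 0, -triple N Y 2] := by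
    ext i <;> fin_cases i <;> simp [triple, starRingEnd_apply]
  rw [← starRingEnd_apply, map_padeDet, hstar, hstar, padeDet_neg_swap]

lemma padeDet_zero_triple (Y Y' : ℤ) :
    padeDet 0 (triple N Y) (triple N Y') = ⟨0, 2 * (Y - Y')⟩ := by
  rw [padeDet_zero]
  ext
  · simp only [triple, Matrix.cons_val, Zsqrtd.re_sub, Zsqrtd.re_mul]
    ring
  · simp only [triple, Matrix.cons_val, Zsqrtd.im_sub, Zsqrtd.im_mul]
    ring

lemma map_triple_zero_mul_map_triple_one (b : MulRingSeminorm (ℤ√N))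
    (h : Y ^ 2 = 4 * D ^ 3 + N) : b (triple N Y 0) * b (triple N Y 1) = b 4 * b D ^ 3 := by
  rw [← map_mul, triple_zero_mul_triple_one h, map_neg_eq_map]
  push_cast
  rw [map_mul, map_pow]

namespace ExtendsPlaces

lemma prod_map_four (ha : ExtendsPlaces a) (hN : (4 * N).natAbs ∈ Nat.factoredNumbers P) :
    ∏ v, a v 4 = 1 := by
  have hmem := Nat.mem_factoredNumbers_of_dvd hN (Int.natAbs_dvd_natAbs.mpr ⟨N, rfl⟩)
  exact_mod_cast ha.prod_map_intCast_eq_one hmem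

lemma prod_map_triple_two (ha : ExtendsPlaces a) (hN : (4 * N).natAbs ∈ Nat.factoredNumbers P)
    (Y : ℤ) : ∏ v, a v (triple N Y 2) = 1 := by
  have hsq := ha.prod_map_intCast_eq_one hN
  simp only [← triple_two_mul_self N Y, ← sq, map_pow, prod_pow] at hsq
  exact (pow_eq_one_iff_of_nonneg (prod_nonneg fun v _ => apply_nonneg _ _) two_ne_zero).mp hsq

lemma isUnitTriple_triple (ha : ExtendsPlaces a) (hN : (4 * N).natAbs ∈ Nat.factoredNumbers P)
    (hY : Y ∈ cubicOrdinates N P) : IsUnitTriple a (triple N Y) where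
  sum_eq_zero := sum_triple N Y
  prod_eq_one := by
    obtain ⟨D, h, hD⟩ := hY
    simp only [Fin.prod_univ_three, map_triple_zero_mul_map_triple_one _ h, prod_mul_distrib,
      prod_pow, ha.prod_map_four hN, ha.prod_map_intCast_eq_one hD, ha.prod_map_triple_two hN,
      one_pow, mul_one]

lemma isLiouvilleSet_triple (ha : ExtendsPlaces a)
    (hN : (4 * N).natAbs ∈ Nat.factoredNumbers P) :
    IsLiouvilleSet a (triple N '' cubicOrdinates N P) where
  isUnitTriple := Set.forall_mem_image.mpr fun _ hY => ha.isUnitTriple_triple hN hY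
  map_natCast_ne_zero v n hn := by
    exact_mod_cast ha.map_intCast_ne_zero (Int.natCast_ne_zero.mpr hn) v
  prod_addConst_le := ha.prod_addConst_le
  eq_zero_or_one_le := by
    rintro _ ⟨Y, -, rfl⟩ _ ⟨Y', -, rfl⟩ m
    exact ha.eq_zero_or_one_le_prod (star_padeDet_triple m Y Y')
  one_le_padeDet_zero := by
    rintro _ ⟨Y, -, rfl⟩ _ ⟨Y', -, rfl⟩ hne
    refine ha.one_le_prod_of_norm_ne_zero (star_padeDet_triple 0 Y Y') ?_
    have hN0 : N ≠ 0 := by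
      rintro rfl
      exact Nat.ne_zero_of_mem_factoredNumbers hN rfl
    have hsub : Y - Y' ≠ 0 := sub_ne_zero.mpr fun h => hne (congrArg _ h)
    simp [padeDet_zero_triple, Zsqrtd.norm_def, hN0, hsub]

end ExtendsPlaces

end CubicOrdinates

section Counting

variable {N : ℤ} {P : Finset ℕ} {a : Option P → MulRingSeminorm (ℤ√N)} {Y Y' D D' g x y : ℤ}

lemma map_four_mul_cube_le (b : MulRingSeminorm (ℤ√N)) (h : Y ^ 2 = 4 * D ^ 3 + N) (Y' : ℤ) :
    b 4 * b D ^ 3 * b (triple N 0 2) ^ 2 ≤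
      maxVal b (triple N Y) ^ 2 * maxVal b (triple N Y') ^ 2 := by
  rw [← map_triple_zero_mul_map_triple_one b h, sq (maxVal b (triple N Y))]
  have hnonneg : 0 ≤ maxVal b (triple N Y) := (apply_nonneg b _).trans (le_maxVal _ 0)
  gcongr
  exacts [le_maxVal _ 0, le_maxVal _ 1, le_maxVal (triple N Y') 2]

namespace ExtendsPlaces

lemma max_abs_pow_three_le (ha : ExtendsPlaces a)
    (hN : (4 * N).natAbs ∈ Nat.factoredNumbers P) (hg : g.natAbs ∈ Nat.factoredNumbers P)
    (hxy : IsCoprime x y) (h : Y ^ 2 = 4 * (g * x) ^ 3 + N) (h' : Y' ^ 2 = 4 * (g * y) ^ 3 + N) :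
    max |(x : ℝ)| |(y : ℝ)| ^ 3 ≤
      (∏ v, maxVal (a v) (triple N Y)) ^ 2 * (∏ v, maxVal (a v) (triple N Y')) ^ 2 := by
  have hlocal (v : Option P) :
      a v 4 * (a v g * max (a v x) (a v y)) ^ 3 * a v (triple N 0 2) ^ 2 ≤
        maxVal (a v) (triple N Y) ^ 2 * maxVal (a v) (triple N Y') ^ 2 := by
    have hx := map_four_mul_cube_le (a v) h Y'
    have hy := map_four_mul_cube_le (a v) h' Y
    rw [Int.cast_mul, map_mul] at hx hy
    rcases max_choice (a v (x : ℤ√N)) (a v y) with hmax | hmax <;> rw [hmax]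
    exacts [hx, hy.trans_eq (mul_comm _ _)]
  have hnonneg (v : Option P) :
      0 ≤ a v 4 * (a v g * max (a v x) (a v y)) ^ 3 * a v (triple N 0 2) ^ 2 := by positivity
  have hglobal := prod_le_prod (fun v _ => hnonneg v) fun v (_ : v ∈ univ) => hlocal v
  simp only [prod_mul_distrib, prod_pow, ha.prod_map_four hN, ha.prod_map_intCast_eq_one hg,
    ha.prod_map_triple_two hN, one_pow, one_mul, mul_one] at hglobal
  exact (pow_le_pow_left₀ (by positivity) (ha.max_abs_le_prod_max hxy) 3).trans hglobal

lemma prod_maxVal_pow_four_le (ha : ExtendsPlaces a)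
    (hN : (4 * N).natAbs ∈ Nat.factoredNumbers P) (hY : Y ∈ cubicOrdinates N P)
    (hsmall : quality a (triple N Y) < 100 * log 2) :
    (∏ v, maxVal (a v) (triple N Y)) ^ 4 ≤ 2 ^ 135 := by
  have hunit := ha.isUnitTriple_triple hN hY
  have hheight := hunit.three_mul_height_le ha.prod_addConst_le
  rw [← hunit.exp_height, ← Real.exp_nat_mul, ← Real.le_log_iff_exp_le (by positivity),
    Real.log_pow]
  push_cast
  linarith [Real.log_pos one_lt_two]

lemma exists_abs_le_of_small_quality (ha : ExtendsPlaces a)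
    (hN : (4 * N).natAbs ∈ Nat.factoredNumbers P) (h : Y ^ 2 = 4 * D ^ 3 + N)
    (h' : Y' ^ 2 = 4 * D' ^ 3 + N) (hD : D.natAbs ∈ Nat.factoredNumbers P)
    (hD' : D'.natAbs ∈ Nat.factoredNumbers P) (hsmall : quality a (triple N Y) < 100 * log 2)
    (hsmall' : quality a (triple N Y') < 100 * log 2) :
    ∃ x y : ℤ, y ≠ 0 ∧ D * y = x * D' ∧ |x| ≤ 2 ^ 45 ∧ |y| ≤ 2 ^ 45 := by
  have hD0 : D ≠ 0 := Int.natAbs_ne_zero.mp (Nat.ne_zero_of_mem_factoredNumbers hD)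
  have hD0' : D' ≠ 0 := Int.natAbs_ne_zero.mp (Nat.ne_zero_of_mem_factoredNumbers hD')
  obtain ⟨x, y, hxy, hx, hy⟩ := Int.exists_gcd_one (Int.gcd_pos_of_ne_zero_left D' hD0)
  rw [mul_comm] at hx hy
  have hg : (Int.gcd D D' : ℤ).natAbs ∈ Nat.factoredNumbers P :=
    Nat.mem_factoredNumbers_of_dvd hD (Int.natAbs_dvd_natAbs.mpr (Int.gcd_dvd_left ..))
  have hcube := ha.max_abs_pow_three_le hN hg (Int.isCoprime_iff_gcd_eq_one.mpr hxy)
    (by rwa [← hx]) (by rwa [← hy])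
  have hbound := ha.prod_maxVal_pow_four_le hN ⟨D, h, hD⟩ hsmall
  have hbound' := ha.prod_maxVal_pow_four_le hN ⟨D', h', hD'⟩ hsmall'
  have hmax : max |(x : ℝ)| |(y : ℝ)| ≤ 2 ^ 45 := by
    refine le_of_pow_le_pow_left₀ (n := 6) (by norm_num) (by positivity) ?_
    calc max |(x : ℝ)| |(y : ℝ)| ^ 6
      _ = (max |(x : ℝ)| |(y : ℝ)| ^ 3) ^ 2 := by ring
      _ ≤ ((∏ v, maxVal (a v) (triple N Y)) ^ 2 * (∏ v, maxVal (a v) (triple N Y')) ^ 2) ^ 2 := by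
          gcongr
      _ = (∏ v, maxVal (a v) (triple N Y)) ^ 4 * (∏ v, maxVal (a v) (triple N Y')) ^ 4 := by ring
      _ ≤ 2 ^ 135 * 2 ^ 135 := by gcongr
      _ = (2 ^ 45) ^ 6 := by norm_num
  refine ⟨x, y, fun hy0 => hD0' (by rw [hy, hy0, mul_zero]), by linear_combination y * hx - x * hy,
    ?_, ?_⟩
  · exact_mod_cast (le_max_left _ _).trans hmax
  · exact_mod_cast (le_max_right _ _).trans hmax

lemma card_le_of_small_quality (ha : ExtendsPlaces a)
    (hN : (4 * N).natAbs ∈ Nat.factoredNumbers P) {T : Finset ℤ}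
    (hT : ∀ Y ∈ T, Y ∈ cubicOrdinates N P)
    (hsmall : ∀ Y ∈ T, quality a (triple N Y) < 100 * log 2) :
    #T ≤ 2 * (2 ^ 46 + 1) ^ 2 := by
  obtain rfl | ⟨Y₀, hY₀⟩ := T.eq_empty_or_nonempty
  · simp
  choose! D hD hDP using hT
  choose! x y hy0 hxy hx hy using fun Y (hY : Y ∈ T) => ha.exists_abs_le_of_small_quality hN
    (hD Y hY) (hD Y₀ hY₀) (hDP Y hY) (hDP Y₀ hY₀) (hsmall Y hY) (hsmall Y₀ hY₀)
  have hinj : Set.InjOn (fun Y => (x Y, y Y, decide (0 ≤ Y))) T := by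
    intro Y hY Y' hY' heq
    simp only [Prod.mk.injEq, decide_eq_decide] at heq
    obtain ⟨hxeq, hyeq, hsign⟩ := heq
    have hmul := hxy Y' hY'
    rw [← hxeq, ← hyeq, ← hxy Y hY] at hmul
    have hsq : Y ^ 2 = Y' ^ 2 := by
      rw [hD Y hY, hD Y' hY', mul_right_cancel₀ (hy0 Y hY) hmul]
    rcases sq_eq_sq_iff_eq_or_eq_neg.mp hsq with h | h <;> omega
  have hcard : #(Icc (-2 ^ 45 : ℤ) (2 ^ 45)) = 2 ^ 46 + 1 := by
    rw [Int.card_Icc]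
    norm_num
    rfl
  calc #T ≤ #(Icc (-2 ^ 45 : ℤ) (2 ^ 45) ×ˢ Icc (-2 ^ 45 : ℤ) (2 ^ 45) ×ˢ (univ : Finset Bool)) :=
        card_le_card_of_injOn _ (fun Y hY => by
          simpa only [coe_product, Set.mem_prod, mem_coe, mem_Icc, mem_univ, and_true] using
            ⟨abs_le.mp (hx Y hY), abs_le.mp (hy Y hY)⟩) hinj
    _ = 2 * (2 ^ 46 + 1) ^ 2 := by
        rw [card_product, card_product, hcard, card_univ, Fintype.card_bool]
        ring

lemma card_le_of_subset_cubicOrdinates (ha : ExtendsPlaces a)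
    (hN : (4 * N).natAbs ∈ Nat.factoredNumbers P) {T : Finset ℤ} (hT : ↑T ⊆ cubicOrdinates N P) :
    #T ≤ 12 * ((25 / 21 : ℝ) ^ 6 * (67 / 4)) ^ (#P + 1) + 2 * (2 ^ 46 + 1) ^ 2 := by
  classical
  set T₁ := {Y ∈ T | 100 * log 2 ≤ quality a (triple N Y)}
  set T₂ := {Y ∈ T | ¬100 * log 2 ≤ quality a (triple N Y)}
  have hlarge : #T₁ ≤ 12 * ((25 / 21 : ℝ) ^ 6 * (67 / 4)) ^ (#P + 1) := by
    have hsub : ((T₁.image (triple N) : Finset _) : Set _) ⊆ triple N '' cubicOrdinates N P := by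
      rw [coe_image]
      exact Set.image_mono ((coe_subset.mpr (filter_subset _ _)).trans hT)
    have hcard := ((ha.isLiouvilleSet_triple hN).mono hsub).card_le_of_large_quality
      (forall_mem_image.mpr fun Y hY => (mem_filter.mp hY).2)
    rwa [card_image_of_injective _ (triple_injective N), Fintype.card_option,
      Fintype.card_coe] at hcard
  have hsmall : (#T₂ : ℝ) ≤ 2 * (2 ^ 46 + 1) ^ 2 := by
    exact_mod_cast ha.card_le_of_small_quality hN
      (fun Y hY => hT (mem_filter.mp hY).1) fun Y hY => not_le.mp (mem_filter.mp hY).2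
  rw [← card_filter_add_card_filter_not (fun Y => 100 * log 2 ≤ quality a (triple N Y))]
  push_cast
  exact add_le_add hlarge hsmall

end ExtendsPlaces

lemma twelve_mul_pow_add_le (s : ℕ) :
    12 * ((25 / 21 : ℝ) ^ 6 * (67 / 4)) ^ s + 2 * (2 ^ 46 + 1) ^ 2 ≤ 7 ^ 60 + 6 * 7 ^ (2 * s) := by
  rcases lt_or_ge s 27 with hs | hs
  · calc 12 * ((25 / 21 : ℝ) ^ 6 * (67 / 4)) ^ s + 2 * (2 ^ 46 + 1) ^ 2
      _ ≤ 12 * ((25 / 21 : ℝ) ^ 6 * (67 / 4)) ^ 26 + 2 * (2 ^ 46 + 1) ^ 2 := by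
          gcongr
          · norm_num
          · exact Nat.le_of_lt_succ hs
      _ ≤ 7 ^ 60 := by norm_num
      _ ≤ _ := le_add_of_nonneg_right (by positivity)
  · have hratio : 2 ≤ (7 ^ 2 / ((25 / 21 : ℝ) ^ 6 * (67 / 4))) ^ s :=
      calc (2 : ℝ) ≤ (7 ^ 2 / ((25 / 21 : ℝ) ^ 6 * (67 / 4))) ^ 27 := by norm_num
        _ ≤ _ := pow_le_pow_right₀ (by norm_num) hs
    rw [div_pow, le_div_iff₀ (by positivity), ← pow_mul] at hratio
    have : (2 * (2 ^ 46 + 1) ^ 2 : ℝ) ≤ 7 ^ 60 := by norm_num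
    linarith

lemma encard_cubicOrdinates_le (hP : ∀ p ∈ P, p.Prime)
    (hN : (4 * N).natAbs ∈ Nat.factoredNumbers P) :
    (cubicOrdinates N P).encard ≤ (7 ^ 60 + 6 * 7 ^ (2 * (#P + 1)) : ℕ) := by
  obtain ⟨a, ha⟩ := exists_extendsPlaces N hP
  refine le_of_not_gt fun hlt => ?_
  obtain ⟨S, hS, hcard⟩ := Set.exists_subset_encard_eq (Order.add_one_le_of_lt hlt)
  lift S to Finset ℤ using Set.finite_of_encard_eq_coe hcard
  rw [Set.encard_coe_eq_coe_finsetCard] at hcard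
  have hle : #S ≤ 7 ^ 60 + 6 * 7 ^ (2 * (#P + 1)) := by
    exact_mod_cast (ha.card_le_of_subset_cubicOrdinates hN hS).trans (twelve_mul_pow_add_le _)
  exact (Nat.lt_succ_of_le hle).ne (by exact_mod_cast hcard)

end Counting

section EllipticCurves

lemma exists_root_of_addOrderOf_eq_two {F : Type*} [Field F] [NeZero (2 : F)] [DecidableEq F]
    {A B : F} {Q : Affine.Point (⟨0, 0, 0, A, B⟩ : Affine F)} (hQ : addOrderOf Q = 2) :
    ∃ x, x ^ 3 + A * x + B = 0 := by
  have hQ0 : Q ≠ 0 := by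
    rintro rfl
    simp at hQ
  have hneg : Q = -Q := by
    rw [eq_neg_iff_add_eq_zero, ← two_nsmul, ← hQ, addOrderOf_nsmul_eq_zero]
  rcases Q with _ | ⟨x, y, hxy⟩
  · exact absurd rfl hQ0
  rw [Affine.Point.neg_some, Affine.Point.some.injEq] at hneg
  have hy : 2 * y = 0 := by
    have hy_neg : y = -y := by simpa [Affine.negY] using hneg.2
    linear_combination hy_neg
  obtain rfl : y = 0 := (mul_eq_zero_iff_left two_ne_zero).mp hy
  have heq := (Affine.equation_iff _ _).mp hxy.1
  exact ⟨x, by linear_combination -heq⟩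

lemma exists_int_root {A B : ℤ} {x : ℚ} (h : x ^ 3 + A * x + B = 0) :
    ∃ r : ℤ, r ^ 3 + A * r + B = 0 := by
  open Polynomial in
  have hmonic : (X ^ 3 + (C A * X + C B) : ℤ[X]).Monic := by
    apply monic_X_pow_add
    compute_degree!
  obtain ⟨r, rfl⟩ := isInteger_of_is_root_of_monic (r := x) hmonic (by
    simpa [← add_assoc] using h)
  rw [eq_intCast] at h
  exact ⟨r, by exact_mod_cast h⟩

/-- The coefficients `(A, B)` of the cubics `X ^ 3 + A * X + B` of discriminant `N` that have an
integral root. -/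
def rootedCubics (N : ℤ) : Set (ℤ × ℤ) :=
  {AB | -(4 * AB.1 ^ 3 + 27 * AB.2 ^ 2) = N ∧ ∃ r : ℤ, r ^ 3 + AB.1 * r + AB.2 = 0}

/-- The coefficients `(A, B)` of the curves `Y ^ 2 = X ^ 3 + A * X + B` of discriminant `Δ` that
have a rational point of finite even order. Since `addOrderOf` is `0`, hence even, at the points of
infinite order, finiteness is required separately. -/
def evenTorsionCurves (Δ : ℤ) : Set (ℤ × ℤ) :=
  {AB | -16 * (4 * AB.1 ^ 3 + 27 * AB.2 ^ 2) = Δ ∧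
    ∃ Q : Affine.Point (⟨0, 0, 0, (AB.1 : ℚ), (AB.2 : ℚ)⟩ : Affine ℚ),
      IsOfFinAddOrder Q ∧ Even (addOrderOf Q)}

lemma evenTorsionCurves_subset_rootedCubics (N : ℤ) :
    evenTorsionCurves (16 * N) ⊆ rootedCubics N := by
  rintro ⟨A, B⟩ ⟨hdisc, Q, hfin, heven⟩
  obtain ⟨x, hx⟩ := exists_root_of_addOrderOf_eq_two
    (addOrderOf_nsmul_addOrderOf_sub hfin.addOrderOf_pos.ne' heven.two_dvd)
  exact ⟨by linarith, exists_int_root hx⟩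

variable {A B r N : ℤ} {P : Finset ℕ}

lemma discr_eq_of_root (h : r ^ 3 + A * r + B = 0) :
    -(4 * A ^ 3 + 27 * B ^ 2) = (3 * r ^ 2 + A) ^ 2 * (9 * r ^ 2 - 4 * (3 * r ^ 2 + A)) := by
  obtain rfl : B = -(r ^ 3 + A * r) := by linear_combination h
  ring

lemma eq_of_deriv_eq_of_mul_deriv_eq {A' B' r' : ℤ} (h : r ^ 3 + A * r + B = 0)
    (h' : r' ^ 3 + A' * r' + B' = 0) (h0 : 3 * r ^ 2 + A ≠ 0)
    (hderiv : 3 * r ^ 2 + A = 3 * r' ^ 2 + A')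
    (hmul : 3 * r * (3 * r ^ 2 + A) = 3 * r' * (3 * r' ^ 2 + A')) : A = A' ∧ B = B' := by
  rw [← hderiv] at hmul
  obtain rfl : r = r' := by linarith [mul_right_cancel₀ h0 hmul]
  obtain rfl : A = A' := by linarith
  exact ⟨rfl, by linarith⟩

lemma encard_rootedCubics_le (hN : N.natAbs ∈ Nat.factoredNumbers P) :
    (rootedCubics N).encard ≤ (cubicOrdinates N P).encard := by
  choose! r hr using fun AB (h : AB ∈ rootedCubics N) => h.2
  let D (AB : ℤ × ℤ) : ℤ := 3 * r AB ^ 2 + AB.1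
  have hND {AB} (h : AB ∈ rootedCubics N) : N = D AB ^ 2 * (9 * r AB ^ 2 - 4 * D AB) :=
    h.1.symm.trans (discr_eq_of_root (hr AB h))
  have hsol {AB} (h : AB ∈ rootedCubics N) : (3 * r AB * D AB) ^ 2 = 4 * D AB ^ 3 + N := by
    linear_combination -hND h
  have hDN {AB} (h : AB ∈ rootedCubics N) : D AB ∣ N :=
    ⟨D AB * (9 * r AB ^ 2 - 4 * D AB), by linear_combination hND h⟩
  refine Set.encard_le_encard_of_injOn (f := fun AB => 3 * r AB * D AB)
    (fun AB h => ⟨D AB, hsol h,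
      Nat.mem_factoredNumbers_of_dvd hN (Int.natAbs_dvd_natAbs.mpr (hDN h))⟩) ?_
  intro AB h AB' h' (heq : 3 * r AB * D AB = 3 * r AB' * D AB')
  have hcube : D AB ^ 3 = D AB' ^ 3 := by
    have := hsol h
    rw [heq, hsol h'] at this
    linarith
  have hD0 : D AB ≠ 0 := by
    intro hD
    have := hDN h
    rw [hD, zero_dvd_iff] at this
    simp [this, Nat.factoredNumbers] at hN
  exact Prod.ext_iff.mpr (eq_of_deriv_eq_of_mul_deriv_eq (hr AB h) (hr AB' h') hD0
    ((Odd.strictMono_pow (by decide : Odd 3)).injective hcube) heq)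

end EllipticCurves

end EvenOrders

open EvenOrders in
theorem bound_even_orders_general {Δ : ℤ} (hΔ : Δ ≠ 0) :
    (evenTorsionCurves Δ).Finite ∧
      (evenTorsionCurves Δ).ncard ≤ 7 ^ 60 + 6 * 7 ^ (2 * (Δ.natAbs.primeFactors.card + 1)) := by
  obtain hempty | ⟨⟨A, B⟩, hAB⟩ := (evenTorsionCurves Δ).eq_empty_or_nonempty
  · simp [hempty]
  obtain ⟨N, rfl⟩ : ∃ N, Δ = 16 * N :=
    ⟨-(4 * A ^ 3 + 27 * B ^ 2), by linear_combination -hAB.1⟩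
  set P := (16 * N).natAbs.primeFactors
  have hsupport {k : ℤ} (hk : k ∣ 16 * N) : k.natAbs ∈ Nat.factoredNumbers P :=
    Nat.mem_factoredNumbers_of_dvd (Nat.mem_factoredNumbers_of_primeFactors_subset
      (Int.natAbs_ne_zero.mpr hΔ) subset_rfl) (Int.natAbs_dvd_natAbs.mpr hk)
  refine Set.encard_le_coe_iff_finite_ncard_le.mp ?_
  calc (evenTorsionCurves (16 * N)).encard
    _ ≤ (rootedCubics N).encard :=
        Set.encard_le_encard (evenTorsionCurves_subset_rootedCubics N)
    _ ≤ (cubicOrdinates N P).encard := encard_rootedCubics_le (hsupport (dvd_mul_left N 16))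
    _ ≤ (7 ^ 60 + 6 * 7 ^ (2 * (P.card + 1)) : ℕ) :=
        encard_cubicOrdinates_le (fun _ => Nat.prime_of_mem_primeFactors)
          (hsupport ⟨4, by ring⟩)

theorem bound_even_orders (Δ : ℤ) (hΔ : Δ ≠ 0) (t : ℕ)
    (ht : t = Δ.natAbs.primeFactors.card) (n : ℕ)
    (hn : n ∈ ({2, 4, 6, 8, 10, 12} : Set ℕ)) (S : Set (ℤ × ℤ))
    (hS : S = {AB : ℤ × ℤ | 4 * AB.1 ^ 3 + 27 * AB.2 ^ 2 ≠ 0 ∧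
      -16 * (4 * AB.1 ^ 3 + 27 * AB.2 ^ 2) = Δ ∧
      ∃ P : WeierstrassCurve.Affine.Point
        (⟨0, 0, 0, (AB.1 : ℚ), (AB.2 : ℚ)⟩ : WeierstrassCurve.Affine ℚ),
        addOrderOf P = n}) :
    S.Finite ∧ S.ncard ≤ 7 ^ 60 + 6 * 7 ^ (2 * (t + 1)) := by
  obtain ⟨hfin, hcard⟩ := bound_even_orders_general hΔ
  have heven : 0 < n ∧ Even n := by
    rcases hn with rfl | rfl | rfl | rfl | rfl | rfl <;> decide
  have hsub : S ⊆ EvenOrders.evenTorsionCurves Δ := by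
    subst hS
    rintro AB ⟨-, hdisc, Q, rfl⟩
    exact ⟨hdisc, Q, addOrderOf_pos_iff.mp heven.1, heven.2⟩
  subst ht
  exact ⟨hfin.subset hsub, (Set.ncard_le_ncard hsub hfin).trans hcard⟩
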